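/- Let (T,l) be a labeled tree with a non-degenerate labeling l : V(T) → [0,∞) satisfying D(V(T)) = {l(u) : u ∈ V(T)}, where D(V(T)) is the distance set of the ultrametric space (V(T), d_l). Then every real number α with 0 < α < diam V(T) does not belong to the center of distances C(V(T)) of (V(T), d_l). -/

import Mathlib

open scoped Classical

/-- The ultrametric `d_l` generated by a labeling `l` on the vertex set of a tree `G`:
for `u ≠ v` it is the maximum of `l` over the vertices of the unique path joining
`u` and `v`, and `d_l(u,u) = 0`. -/
noncomputable def dl {V : Type*} {G : SimpleGraph V} (hG : G.IsTree) (l : V → ℝ)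
    (u v : V) : ℝ :=
  if u = v then 0
  else (((hG.existsUnique_path u v).exists.choose.support).map l).foldr max (l u)

/-!
A distance exceeding `α` forces a label `l w > α`. Every path leaving `w` passes through `w`, so all
distances from `w` to other vertices exceed `α` as well, and `α > 0` is not a distance from `w`.
-/

/-- The center of distances `C(X)` of a space `X` with distance function `d`. It is set up for an
arbitrary function of two variables so that it applies to `dl` without a bundled metric space. -/
def centerOfDistances {X R : Type*} (d : X → X → R) : Set R :=
  {t | (∃ x y, d x y = t) ∧ ∀ p, ∃ x, d p x = t}

theorem lt_foldr_max_iff {R : Type*} [LinearOrder R] {L : List R} {a b : R} :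
    a < L.foldr max b ↔ a < b ∨ ∃ c ∈ L, a < c := by
  induction L with
  | nil => simp
  | cons c L ih => simp [ih, or_left_comm]

section LabeledTree

variable {V : Type*} {G : SimpleGraph V} (hG : G.IsTree) (l : V → ℝ)

theorem dl_self (u : V) : dl hG l u u = 0 := if_pos rfl

variable {l} {u v : V} {α : ℝ}

theorem lt_dl_iff_exists_mem_support (huv : u ≠ v) {p : G.Walk u v} (hp : p.IsPath) :
    α < dl hG l u v ↔ ∃ w ∈ p.support, α < l w := by
  have path_eq : (hG.existsUnique_path u v).exists.choose = p :=
    (hG.existsUnique_path u v).unique (hG.existsUnique_path u v).exists.choose_spec hp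
  simp only [dl, if_neg huv, path_eq, lt_foldr_max_iff, List.mem_map, exists_exists_and_eq_and]
  exact or_iff_right_of_imp fun hu ↦ ⟨u, p.start_mem_support, hu⟩

theorem exists_lt_label_of_lt_dl (hα : 0 ≤ α) (h : α < dl hG l u v) : ∃ w, α < l w := by
  have huv : u ≠ v := by
    rintro rfl
    exact hα.not_gt (dl_self hG l u ▸ h)
  obtain ⟨p, hp, -⟩ := hG.existsUnique_path u v
  obtain ⟨w, -, hw⟩ := (lt_dl_iff_exists_mem_support hG huv hp).mp h
  exact ⟨w, hw⟩

theorem lt_dl_of_lt_label_left (huv : u ≠ v) (hu : α < l u) : α < dl hG l u v := by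
  obtain ⟨p, hp, -⟩ := hG.existsUnique_path u v
  exact (lt_dl_iff_exists_mem_support hG huv hp).mpr ⟨u, p.start_mem_support, hu⟩

theorem not_mem_centerOfDistances_of_lt_diam_general (hα : 0 < α)
    (hα' : ∃ u v : V, α < dl hG l u v) : α ∉ centerOfDistances (dl hG l) := by
  rintro ⟨-, hC⟩
  obtain ⟨u, v, huv⟩ := hα'
  obtain ⟨w, hw⟩ := exists_lt_label_of_lt_dl hG hα.le huv
  obtain ⟨x, hx⟩ := hC w
  rcases eq_or_ne w x with rfl | hwx
  · exact hα.ne (dl_self hG l w ▸ hx)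
  · exact (lt_dl_of_lt_label_left hG hwx hw).ne' hx

end LabeledTree

/-- Let `(T,l)` be a labeled tree with a non-degenerate labeling
`l : V(T) → [0,∞)` satisfying `D(V(T)) = {l(u) : u ∈ V(T)}`.  Then every real `α`
with `0 < α < diam V(T)` (i.e. `0 < α` and some distance exceeds `α`) does not
belong to the center of distances `C(V(T))` of `(V(T), d_l)`. -/
theorem not_mem_centerOfDistances_of_lt_diam
    {V : Type*} {G : SimpleGraph V} (hG : G.IsTree) (l : V → ℝ)
    (hl0 : ∀ v, 0 ≤ l v) (hl : ∀ u v : V, G.Adj u v → 0 < max (l u) (l v))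
    (hD : {t : ℝ | ∃ u v : V, dl hG l u v = t} = Set.range l)
    (α : ℝ) (hα : 0 < α) (hα' : ∃ u v : V, α < dl hG l u v) :
    ¬((∃ u v : V, dl hG l u v = α) ∧ ∀ p : V, ∃ x : V, dl hG l p x = α) :=
  not_mem_centerOfDistances_of_lt_diam_general hG hα hα'
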